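/- For the family of rooted binary trees R_i, f(R_i) = i − 1 for every i ≥ 1. -/

import Mathlib

/-- Finite rooted trees: a node together with the list of subtrees of its children. -/
inductive RTree : Type where
  | node : List RTree → RTree

namespace RTree

/-- `h t` is the number of vertices on a longest path starting at the root
(so a single vertex has `h = 1`). -/
def h : RTree → ℕ
  | node cs => 1 + (cs.attach.map fun c => h c.1).foldr max 0
decreasing_by simp only [node.sizeOf_spec]; have := List.sizeOf_lt_of_mem c.2; omega

/-- The number of vertices of a rooted tree. -/
def size : RTree → ℕ
  | node cs => 1 + (cs.attach.map fun c => size c.1).sum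
decreasing_by simp only [node.sizeOf_spec]; have := List.sizeOf_lt_of_mem c.2; omega

/-- The pairing function `f`: `f t = 0` if `t` has at most one vertex; otherwise, with
the heights of the subtrees rooted at the children listed in non-increasing order
`g₁ ≥ g₂ ≥ …` (padding with the height-`0` empty tree to make the number of entries
even, which does not change the sum below), `f t` is the maximum of `Σᵢ f(Tᵢ)` over all
children subtrees `Tᵢ`, and of `g₂ + g₄ + g₆ + …`. -/
def f : RTree → ℕ
  | node cs =>
    if cs.isEmpty then 0
    else
      let hs : List ℕ :=
        (((cs.attach.map fun c => h c.1 : List ℕ) : Multiset ℕ).sort (· ≤ ·)).reverse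
      max ((cs.attach.map fun c => f c.1).sum)
        (∑ i ∈ Finset.range hs.length, if i % 2 = 1 then hs.getD i 0 else 0)
decreasing_by simp only [node.sizeOf_spec]; have := List.sizeOf_lt_of_mem c.2; omega



/-- The binary trees `H i` (for `i ≥ 1`): `H 1` is a single vertex, and for `i ≥ 2`
the root of `H i` has two children, one a leaf and the other the root of a copy of
`H (i-1)`.  (The value at `0` is junk.) -/
def Htree : ℕ → RTree
  | 0 => node []
  | 1 => node []
  | (n + 2) => node [node [], Htree (n + 1)]

/-- The binary trees `R i` (for `i ≥ 1`): `R 1` is a single vertex, and for `i ≥ 2`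
the root of `R i` has two children, the root of a copy of `R (i-1)` and the root of a
copy of `H (i-1)`.  (The value at `0` is junk.) -/
def Rtree : ℕ → RTree
  | 0 => node []
  | 1 => node []
  | (n + 2) => node [Rtree (n + 1), Htree (n + 1)]

end RTree

/-!
On a binary node, `f` is the maximum of the sum of the `f`-values of the two children and of the
smaller of their heights. The children `R i` and `H i` of the root of `R (i + 1)` both have height
`i`, whereas `f (H i) ≤ 1` because every `H i` pairs a leaf with a single branch. So the children
sum is at most `(i - 1) + 1`, and the heights attain `i`.
-/

namespace RTree

theorem sort_pair {α : Type*} [LinearOrder α] (a b : α) :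
    Multiset.sort {a, b} (· ≤ ·) = [min a b, max a b] := by
  wlog hab : a ≤ b generalizing a b
  · rw [Multiset.pair_comm, this b a (le_of_not_ge hab), min_comm, max_comm]
  have h_le : ∀ c ∈ ({b} : Multiset α), a ≤ c := by simpa only [Multiset.mem_singleton, forall_eq]
  rw [min_eq_left hab, max_eq_right hab, Multiset.insert_eq_cons, Multiset.sort_cons a _ _ h_le,
    Multiset.sort_singleton]

theorem h_node (cs : List RTree) : h (node cs) = 1 + (cs.map h).foldr max 0 := by
  rw [h, List.attach_map_val]

theorem f_node (cs : List RTree) :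
    f (node cs) =
      let hs := (((cs.map h : List ℕ) : Multiset ℕ).sort (· ≤ ·)).reverse
      max (cs.map f).sum (∑ i ∈ Finset.range hs.length, if i % 2 = 1 then hs.getD i 0 else 0) := by
  rw [f, List.attach_map_val, List.attach_map_val]
  cases cs <;> simp

theorem h_leaf : h (node []) = 1 := h_node []

theorem h_pair (s t : RTree) : h (node [s, t]) = 1 + max (h s) (h t) := by
  simp [h_node]

theorem f_leaf : f (node []) = 0 := by
  simp [f_node]

theorem f_pair (s t : RTree) : f (node [s, t]) = max (f s + f t) (min (h s) (h t)) := by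
  have heights_sorted : (([s, t].map h : List ℕ) : Multiset ℕ).sort (· ≤ ·) =
      [min (h s) (h t), max (h s) (h t)] := sort_pair (h s) (h t)
  rw [f_node, heights_sorted]
  simp [Finset.sum_range_succ]

theorem h_Htree_succ (n : ℕ) : h (Htree (n + 1)) = n + 1 := by
  induction n with
  | zero => exact h_leaf
  | succ n ih => rw [Htree, h_pair, h_leaf, ih]; omega

theorem h_Rtree_succ (n : ℕ) : h (Rtree (n + 1)) = n + 1 := by
  induction n with
  | zero => exact h_leaf
  | succ n ih => rw [Rtree, h_pair, h_Htree_succ, ih, max_self, add_comm]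

theorem f_Htree_le_one (n : ℕ) : f (Htree n) ≤ 1 := by
  induction n using Htree.induct with
  | case1 | case2 => exact f_leaf.trans_le zero_le_one
  | case3 n ih =>
    rw [Htree, f_pair, f_leaf, h_leaf, zero_add]
    exact max_le ih (min_le_left _ _)

theorem f_Rtree_succ (n : ℕ) : f (Rtree (n + 1)) = n := by
  induction n with
  | zero => exact f_leaf
  | succ n ih =>
    calc f (Rtree (n + 2))
        = max (f (Rtree (n + 1)) + f (Htree (n + 1)))
            (min (h (Rtree (n + 1))) (h (Htree (n + 1)))) := f_pair _ _
      _ = max (n + f (Htree (n + 1))) (n + 1) := by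
          rw [ih, h_Rtree_succ, h_Htree_succ, min_self]
      _ = n + 1 := max_eq_right (Nat.add_le_add_left (f_Htree_le_one _) n)

end RTree

/-- For the family of binary trees `R i`: `f (R i) = i - 1` for all `i ≥ 1`. -/
theorem f_Rtree : ∀ i : ℕ, 1 ≤ i → (RTree.Rtree i).f = i - 1 := by
  intro i hi
  obtain ⟨n, rfl⟩ := Nat.exists_eq_add_of_le' hi
  exact RTree.f_Rtree_succ n
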